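/- Suppose f takes values only in {0,1}. Then the minimum weighted L0 error over all isotonic g : V → ℝ equals the minimum weighted L1 error over all isotonic g : V → ℝ, and both minima are attained by an isotonic function taking values only in {0,1}. (L0 isotonic regression with two labels coincides with L1 isotonic regression of {0,1}-valued data.) -/

import Mathlib

/-!
Replace a real `x` by `1` if `t ≤ x` and by `0` otherwise. This keeps functions isotonic, fixes
`{0,1}`-valued functions when `0 < t ≤ 1`, and never increases the L0 error. It separates `x` from
`y` exactly when `t` lies in the interval between them, which has length `|x - y|`; hence averaging
over `t ∈ (0, 1]` bounds the mean L1 error of the rounded function by the original L1 error, and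
some `t` does not increase the L1 error. Thus every isotonic function is matched, in both errors at
once, by a `{0,1}`-valued isotonic one. There are finitely many of the latter, and on them the two
errors agree.
-/

open MeasureTheory Set

namespace IsotonicRegression

/-- Rounding of a real number to `{0,1}` at level `t`; composed with `h` on the left it gives the
indicator function of the superlevel set `{v | t ≤ h v}`. -/
noncomputable def threshold (t x : ℝ) : ℝ := if t ≤ x then 1 else 0

/-- Functions with values in `{0,1}`, the two labels being encoded as real numbers. -/
def IsBinary {V : Type*} (g : V → ℝ) : Prop := ∀ v, g v = 0 ∨ g v = 1

/-- The weighted L0 error of `g` as an approximation of the data `f`. -/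
noncomputable def l0Error {V : Type*} [Fintype V] (w f g : V → ℝ) : ℝ :=
  ∑ v, w v * (if g v = f v then 0 else 1)

/-- The weighted L1 error of `g` as an approximation of the data `f`. -/
noncomputable def l1Error {V : Type*} [Fintype V] (w f g : V → ℝ) : ℝ :=
  ∑ v, w v * |g v - f v|

section Threshold

theorem monotone_threshold (t : ℝ) : Monotone (threshold t) := by
  intro x y hxy
  unfold threshold
  split_ifs with hx hy
  · exact le_rfl
  · exact absurd (hx.trans hxy) hy
  · exact zero_le_one
  · exact le_rfl

theorem isBinary_threshold_comp {V : Type*} (t : ℝ) (h : V → ℝ) : IsBinary (threshold t ∘ h) :=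
  fun _ => (ite_eq_or_eq _ _ _).symm

theorem IsBinary.threshold_comp {V : Type*} {g : V → ℝ} (hg : IsBinary g) {t : ℝ}
    (ht : t ∈ Ioc 0 1) : threshold t ∘ g = g := by
  funext v
  rcases hg v with hv | hv <;> simp [threshold, hv, ht.1, ht.2]

theorem abs_threshold_sub_threshold (t x y : ℝ) :
    |threshold t x - threshold t y| = (uIoc x y).indicator 1 t := by
  by_cases hx : t ≤ x <;> by_cases hy : t ≤ y <;>
    simp [threshold, mem_uIoc, hx, hy, lt_of_not_ge]

theorem integrable_abs_threshold_sub_threshold (x y : ℝ) :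
    Integrable fun t => |threshold t x - threshold t y| := by
  simp only [abs_threshold_sub_threshold]
  exact (integrable_indicator_iff measurableSet_uIoc).mpr
    (integrableOn_const measure_Ioc_lt_top.ne)

theorem integral_abs_threshold_sub_threshold (x y : ℝ) :
    ∫ t, |threshold t x - threshold t y| = |x - y| := by
  simp only [abs_threshold_sub_threshold]
  rw [integral_indicator_one measurableSet_uIoc, Measure.real, Real.volume_uIoc,
    ENNReal.toReal_ofReal (abs_nonneg _), abs_sub_comm]

end Threshold

section Errors

variable {V : Type*} [Fintype V] {w : V → ℝ}

theorem l0Error_eq_l1Error {f g : V → ℝ} (hf : IsBinary f) (hg : IsBinary g) :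
    l0Error w f g = l1Error w f g := by
  refine Finset.sum_congr rfl fun v _ => ?_
  rcases hf v with hfv | hfv <;> rcases hg v with hgv | hgv <;> simp [hfv, hgv]

theorem l0Error_comp_le (hw : ∀ v, 0 ≤ w v) (φ : ℝ → ℝ) (f g : V → ℝ) :
    l0Error w (φ ∘ f) (φ ∘ g) ≤ l0Error w f g := by
  refine Finset.sum_le_sum fun v _ => mul_le_mul_of_nonneg_left ?_ (hw v)
  by_cases hv : g v = f v
  · simp [hv]
  · rw [if_neg hv]
    split_ifs <;> norm_num

theorem integrable_l1Error_threshold_comp (w f g : V → ℝ) :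
    Integrable fun t => l1Error w (threshold t ∘ f) (threshold t ∘ g) :=
  integrable_finsetSum _ fun v _ =>
    (integrable_abs_threshold_sub_threshold (g v) (f v)).const_mul (w v)

theorem integral_l1Error_threshold_comp (w f g : V → ℝ) :
    ∫ t, l1Error w (threshold t ∘ f) (threshold t ∘ g) = l1Error w f g := by
  simp only [l1Error, Function.comp_apply]
  rw [integral_finsetSum _ fun v _ =>
    (integrable_abs_threshold_sub_threshold (g v) (f v)).const_mul (w v)]
  simp only [integral_const_mul, integral_abs_threshold_sub_threshold]

theorem l1Error_nonneg (hw : ∀ v, 0 ≤ w v) (f g : V → ℝ) : 0 ≤ l1Error w f g :=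
  Finset.sum_nonneg fun v _ => mul_nonneg (hw v) (abs_nonneg _)

theorem exists_l1Error_threshold_comp_le (hw : ∀ v, 0 ≤ w v) (f g : V → ℝ) :
    ∃ t ∈ Ioc (0 : ℝ) 1, l1Error w (threshold t ∘ f) (threshold t ∘ g) ≤ l1Error w f g := by
  have hint := integrable_l1Error_threshold_comp w f g
  obtain ⟨t, ht, hle⟩ := exists_le_setAverage (s := Ioc (0 : ℝ) 1) (by simp) (by simp)
    hint.integrableOn
  refine ⟨t, ht, hle.trans ?_⟩
  calc ⨍ s in Ioc (0 : ℝ) 1, l1Error w (threshold s ∘ f) (threshold s ∘ g)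
      = ∫ s in Ioc (0 : ℝ) 1, l1Error w (threshold s ∘ f) (threshold s ∘ g) := by
        simp [setAverage_eq]
    _ ≤ ∫ s, l1Error w (threshold s ∘ f) (threshold s ∘ g) :=
        setIntegral_le_integral hint (.of_forall fun _ => l1Error_nonneg hw _ _)
    _ = l1Error w f g := integral_l1Error_threshold_comp w f g

end Errors

theorem finite_setOf_isBinary (V : Type*) [Finite V] : {g : V → ℝ | IsBinary g}.Finite :=
  Finite.pi' fun _ => toFinite {0, 1}

theorem exists_monotone_isBinary_error_le {V : Type*} [Preorder V] [Fintype V] {f w : V → ℝ}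
    (hf : IsBinary f) (hw : ∀ v, 0 ≤ w v) {h : V → ℝ} (hh : Monotone h) :
    ∃ g : V → ℝ, Monotone g ∧ IsBinary g ∧
      l0Error w f g ≤ l0Error w f h ∧ l1Error w f g ≤ l1Error w f h := by
  obtain ⟨t, ht, hl1⟩ := exists_l1Error_threshold_comp_le hw f h
  have hl0 := l0Error_comp_le hw (threshold t) f h
  rw [hf.threshold_comp ht] at hl0 hl1
  exact ⟨threshold t ∘ h, (monotone_threshold t).comp hh, isBinary_threshold_comp t h, hl0, hl1⟩

end IsotonicRegression

open IsotonicRegression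

theorem L0_eq_L1_for_binary_data_general {V : Type*} [Preorder V] [Fintype V] {f w : V → ℝ}
    (hf : IsBinary f) (hw : ∀ v, 0 ≤ w v) :
    ∃ g : V → ℝ, Monotone g ∧ IsBinary g ∧
      (∀ h : V → ℝ, Monotone h → l0Error w f g ≤ l0Error w f h) ∧
      (∀ h : V → ℝ, Monotone h → l1Error w f g ≤ l1Error w f h) ∧
      l0Error w f g = l1Error w f g := by
  obtain ⟨g, ⟨hg, hgb⟩, hmin⟩ := exists_min_image {g : V → ℝ | Monotone g ∧ IsBinary g}
    (l1Error w f) ((finite_setOf_isBinary V).subset fun _ hg => hg.2)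
    ⟨fun _ => 0, monotone_const, fun _ => .inl rfl⟩
  have hg01 : l0Error w f g = l1Error w f g := l0Error_eq_l1Error hf hgb
  refine ⟨g, hg, hgb, fun h hh => ?_, fun h hh => ?_, hg01⟩ <;>
    obtain ⟨k, hk, hkb, hk0, hk1⟩ := exists_monotone_isBinary_error_le hf hw hh
  · calc l0Error w f g = l1Error w f g := hg01
      _ ≤ l1Error w f k := hmin k ⟨hk, hkb⟩
      _ = l0Error w f k := (l0Error_eq_l1Error hf hkb).symm
      _ ≤ l0Error w f h := hk0
  · exact (hmin k ⟨hk, hkb⟩).trans hk1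

/-- For `{0,1}`-valued data, L0 isotonic regression coincides with L1 isotonic
regression: the two minima are equal and both are attained by an isotonic
`{0,1}`-valued function. -/
theorem L0_eq_L1_for_binary_data {V : Type*} [PartialOrder V] [Fintype V]
    [Nonempty V] (f w : V → ℝ) (hf : ∀ v, f v = 0 ∨ f v = 1) (hw : ∀ v, 0 ≤ w v) :
    ∃ g : V → ℝ, Monotone g ∧ (∀ v, g v = 0 ∨ g v = 1) ∧
      (∀ h : V → ℝ, Monotone h →
        ∑ v, w v * (if g v = f v then 0 else 1) ≤
          ∑ v, w v * (if h v = f v then 0 else 1)) ∧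
      (∀ h : V → ℝ, Monotone h →
        ∑ v, w v * |g v - f v| ≤ ∑ v, w v * |h v - f v|) ∧
      ∑ v, w v * (if g v = f v then 0 else 1) = ∑ v, w v * |g v - f v| :=
  L0_eq_L1_for_binary_data_general hf hw
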